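/- There is a constant C depending only on m and n such that: if P ∈ Γ̃₀, then there exists F ∈ C^m(ℝⁿ) with ‖F‖_{C^m(ℝⁿ)} ≤ C, F ≥ 0 everywhere on ℝⁿ, and J₀(F) = P. -/

import Mathlib

open scoped BigOperators

noncomputable section

abbrev Euc (n : ℕ) : Type := EuclideanSpace ℝ (Fin n)
abbrev MPoly (n : ℕ) : Type := MvPolynomial (Fin n) ℝ

/-- Partial derivative in the `i`-th coordinate direction. -/
noncomputable def pD {n : ℕ} (i : Fin n) (F : Euc n → ℝ) : Euc n → ℝ :=
  fun x => fderiv ℝ F x (EuclideanSpace.single i (1 : ℝ))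

/-- The multi-index partial derivative `∂^α F`. -/
noncomputable def mD {n : ℕ} (α : Fin n → ℕ) (F : Euc n → ℝ) : Euc n → ℝ :=
  (((List.finRange n).flatMap fun i => List.replicate (α i) i)).foldr pD F

/-- Partial derivative within a set. -/
noncomputable def pDW {n : ℕ} (s : Set (Euc n)) (i : Fin n) (F : Euc n → ℝ) : Euc n → ℝ :=
  fun x => fderivWithin ℝ F s x (EuclideanSpace.single i (1 : ℝ))

/-- Multi-index partial derivative within a set. -/
noncomputable def mDW {n : ℕ} (s : Set (Euc n)) (α : Fin n → ℕ) (F : Euc n → ℝ) : Euc n → ℝ :=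
  (((List.finRange n).flatMap fun i => List.replicate (α i) i)).foldr (pDW s) F

/-- The order `|α|` of a multi-index. -/
def deg {n : ℕ} (α : Fin n → ℕ) : ℕ := ∑ i, α i

/-- Evaluation of an `n`-variable polynomial at a point of `ℝⁿ`. -/
noncomputable def peval {n : ℕ} (P : MPoly n) (x : Euc n) : ℝ :=
  MvPolynomial.eval (fun i => x i) P

/-- `F ∈ C^m(ℝⁿ)` with `‖F‖_{C^m(ℝⁿ)} ≤ M`. -/
def CmNormLe (m n : ℕ) (F : Euc n → ℝ) (M : ℝ) : Prop :=
  ContDiff ℝ (m : ℕ∞) F ∧ ∀ α : Fin n → ℕ, deg α ≤ m → ∀ x : Euc n, |mD α F x| ≤ M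

/-- `F ∈ C^{m-1,1}(ℝⁿ)` with `‖F‖_{C^{m-1,1}(ℝⁿ)} ≤ M`. -/
def CmLipNormLe (m n : ℕ) (F : Euc n → ℝ) (M : ℝ) : Prop :=
  ContDiff ℝ ((m - 1 : ℕ) : ℕ∞) F ∧
  (∀ α : Fin n → ℕ, deg α ≤ m - 1 → ∀ x : Euc n, |mD α F x| ≤ M) ∧
  (∀ α : Fin n → ℕ, deg α = m - 1 → ∀ i : Fin n, ∀ x : Euc n, ∀ t : ℝ,
    |mD α F (x + t • EuclideanSpace.single i (1 : ℝ)) - mD α F x| ≤ M * |t|)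

/-- `J_x(F) = P`, i.e. `P` is the `(m-1)`-st order Taylor polynomial of `F` at `x`. -/
def IsJetAt (m n : ℕ) (F : Euc n → ℝ) (x : Euc n) (P : MPoly n) : Prop :=
  P.totalDegree ≤ m - 1 ∧
  ∀ α : Fin n → ℕ, deg α ≤ m - 1 → mD α (peval P) x = mD α F x

/-- `J_x^+(F) = P`, i.e. `P` is the `m`-th order Taylor polynomial of `F` at `x`. -/
def IsJetPlusAt (m n : ℕ) (F : Euc n → ℝ) (x : Euc n) (P : MPoly n) : Prop :=
  P.totalDegree ≤ m ∧
  ∀ α : Fin n → ℕ, deg α ≤ m → mD α (peval P) x = mD α F x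

/-- Truncation of a polynomial: keep the monomials of total degree `≤ d`. -/
noncomputable def truncLE {n : ℕ} (d : ℕ) (P : MPoly n) : MPoly n :=
  ∑ s ∈ P.support.filter (fun s => (s.sum fun _ e => e) ≤ d),
    MvPolynomial.monomial s (P.coeff s)

/-- Substitution `y ↦ y + v` in a polynomial. -/
noncomputable def polyShift {n : ℕ} (v : Fin n → ℝ) (P : MPoly n) : MPoly n :=
  MvPolynomial.aeval (fun i => (MvPolynomial.X i + MvPolynomial.C (v i) : MPoly n)) P

/-- The `(m-1)`-st order Taylor polynomial of a polynomial `P` at `x`. -/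
noncomputable def jetTrunc (m n : ℕ) (x : Euc n) (P : MPoly n) : MPoly n :=
  polyShift (fun i => -(x i)) (truncLE (m - 1) (polyShift (fun i => x i) P))

/-- Multiplication of `(m-1)`-jets at `x`: `P ⊙_x Q = J_x(PQ)`. -/
noncomputable def jmul (m n : ℕ) (x : Euc n) (P Q : MPoly n) : MPoly n :=
  jetTrunc m n x (P * Q)

/-- `Γ*(x,M)`. -/
def GammaStar (m n : ℕ) (x : Euc n) (M : ℝ) : Set (MPoly n) :=
  {P | ∃ F : Euc n → ℝ, CmNormLe m n F M ∧ (∀ y, 0 ≤ F y) ∧ IsJetAt m n F x P}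

/-- `Γ_f(x,M)`. -/
def GammaF (m n : ℕ) (f : Euc n → ℝ) (x : Euc n) (M : ℝ) : Set (MPoly n) :=
  {P ∈ GammaStar m n x M | peval P x = f x}

/-- `Γ'*(x,M)` (the `C^{m-1,1}` version). -/
def GammaStar' (m n : ℕ) (x : Euc n) (M : ℝ) : Set (MPoly n) :=
  {P | ∃ F : Euc n → ℝ, CmLipNormLe m n F M ∧ (∀ y, 0 ≤ F y) ∧ IsJetAt m n F x P}

/-- `Γ'_f(x,M)`. -/
def GammaF' (m n : ℕ) (f : Euc n → ℝ) (x : Euc n) (M : ℝ) : Set (MPoly n) :=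
  {P ∈ GammaStar' m n x M | peval P x = f x}

/-- `Γ₀⁺`. -/
def Gamma0plus (m n : ℕ) : Set (MPoly n) :=
  {P | P.totalDegree ≤ m ∧
    (∀ β : Fin n → ℕ, deg β ≤ m → |mD β (peval P) 0| ≤ 1) ∧
    (∀ x : Euc n, 0 ≤ peval P x + ‖x‖ ^ m) ∧
    (∀ ε : ℝ, 0 < ε → ∃ δ : ℝ, 0 < δ ∧ ∀ x : Euc n, ‖x‖ ≤ δ → 0 ≤ peval P x + ε * ‖x‖ ^ m)}

/-- `Γ̃₀'`. -/
def GammaTilde0' (m n : ℕ) : Set (MPoly n) :=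
  {P | P.totalDegree ≤ m - 1 ∧
    (∀ β : Fin n → ℕ, deg β ≤ m - 1 → |mD β (peval P) 0| ≤ 1) ∧
    ∀ x : Euc n, 0 ≤ peval P x + ‖x‖ ^ m}

/-- The closed axis-parallel cube with center `c` and sidelength `δ`. -/
def cube {n : ℕ} (c : Euc n) (δ : ℝ) : Set (Euc n) :=
  {y | ∀ i, |y i - c i| ≤ δ / 2}

/-- `F ∈ C^{m-1,1}(Q)` with `‖F‖_{C^{m-1,1}(Q)} ≤ M`, for the cube `Q` of center `c`,
sidelength `δ`. -/
def CmLipOnCubeLe (m n : ℕ) (c : Euc n) (δ : ℝ) (F : Euc n → ℝ) (M : ℝ) : Prop :=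
  ContDiffOn ℝ ((m - 1 : ℕ) : ℕ∞) F (cube c δ) ∧
  (∀ α : Fin n → ℕ, deg α ≤ m - 1 → ∀ x ∈ cube c δ, |mDW (cube c δ) α F x| ≤ M) ∧
  (∀ α : Fin n → ℕ, deg α = m - 1 → ∀ i : Fin n, ∀ x ∈ cube c δ, ∀ t : ℝ,
    x + t • EuclideanSpace.single i (1 : ℝ) ∈ cube c δ →
    |mDW (cube c δ) α F (x + t • EuclideanSpace.single i (1 : ℝ)) - mDW (cube c δ) α F x|
      ≤ M * |t|)

lemma iterFD_affine {V W : Type*} [NormedAddCommGroup V] [NormedSpace ℝ V]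
    [NormedAddCommGroup W] [NormedSpace ℝ W] {f : V → ℝ} {s : Set V} (hs : IsOpen s)
    {k : ℕ} (hf : ContDiffOn ℝ k f s) (A : W →L[ℝ] V) (c : V) {x : W} (hx : A x + c ∈ s) :
    iteratedFDeriv ℝ k (fun y => f (A y + c)) x =
      (iteratedFDeriv ℝ k f (A x + c)).compContinuousLinearMap fun _ => A := by
  have hs' : IsOpen ((fun z => z + c) ⁻¹' s) := hs.preimage (by fun_prop)
  have hf' : ContDiffOn ℝ k (fun z => f (z + c)) ((fun z => z + c) ⁻¹' s) :=
    hf.comp (by fun_prop) (fun z hz => hz)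
  have hA : IsOpen (A ⁻¹' ((fun z => z + c) ⁻¹' s)) := hs'.preimage A.continuous
  have h := A.iteratedFDerivWithin_comp_right hf' hs'.uniqueDiffOn hA.uniqueDiffOn
    (x := x) hx (i := k) le_rfl
  rw [iteratedFDerivWithin_of_isOpen k hA (by exact hx),
    iteratedFDerivWithin_of_isOpen k hs' (by exact hx), iteratedFDeriv_comp_add_right] at h
  exact h

lemma homog_bound {V : Type*} [NormedAddCommGroup V] [NormedSpace ℝ V] [ProperSpace V]
    {f : V → ℝ} {m : ℕ} (hf : ContDiffOn ℝ (m : ℕ∞) f {0}ᶜ)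
    (hh : ∀ t : ℝ, 0 < t → ∀ z, f (t • z) = t ^ m * f z) {k : ℕ} (hk : k ≤ m) :
    ∃ K : ℝ, 0 ≤ K ∧ ∀ z, z ≠ 0 → ‖iteratedFDeriv ℝ k f z‖ ≤ K * ‖z‖ ^ (m - k) := by
  have ho : IsOpen ({0}ᶜ : Set V) := isOpen_compl_singleton
  have hfk : ContDiffOn ℝ k f {0}ᶜ := hf.of_le (by exact_mod_cast hk)
  have hc : ContinuousOn (iteratedFDeriv ℝ k f) {0}ᶜ := by
    refine (hfk.continuousOn_iteratedFDerivWithin le_rfl ho.uniqueDiffOn).congr ?_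
    intro z hz
    exact (iteratedFDerivWithin_of_isOpen k ho hz).symm
  have hsub : Metric.sphere (0 : V) 1 ⊆ {0}ᶜ := by
    intro z hz h0
    simp at h0
    simp [h0] at hz
  obtain ⟨K, hK⟩ := (isCompact_sphere (0 : V) 1).exists_bound_of_continuousOn (hc.mono hsub)
  refine ⟨max K 0, le_max_right _ _, fun z hz => ?_⟩
  have hn : 0 < ‖z‖ := norm_pos_iff.2 hz
  set w := ‖z‖⁻¹ • z with hw
  have hw0 : w ≠ 0 := smul_ne_zero (inv_ne_zero hn.ne') hz
  have hw1 : w ∈ Metric.sphere (0 : V) 1 := by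
    simp [hw, norm_smul, hn.ne']
  have hzw : z = ‖z‖ • w := by rw [hw, smul_smul, mul_inv_cancel₀ hn.ne', one_smul]
  set t := ‖z‖ with ht
  have h1 := iterFD_affine ho hfk (t • ContinuousLinearMap.id ℝ V) 0 (x := w)
    (by simpa using ⟨hn.ne', hw0⟩)
  have h2 : (fun y => f ((t • ContinuousLinearMap.id ℝ V) y + 0)) = t ^ m • f := by
    funext y; simp [hh t hn]
  rw [h2, iteratedFDeriv_const_smul_apply (hfk.contDiffAt (ho.mem_nhds hw0))] at h1
  have h3 : (t • ContinuousLinearMap.id ℝ V) w + 0 = z := by simp [← hzw]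
  rw [h3] at h1
  have h4 : t ^ m • iteratedFDeriv ℝ k f w = t ^ k • iteratedFDeriv ℝ k f z := by
    rw [h1]; ext v
    simp only [ContinuousMultilinearMap.compContinuousLinearMap_apply,
      _root_.smul_apply]
    have := (iteratedFDeriv ℝ k f z).map_smul_univ (fun _ => t) v
    simpa using this
  have h5 : t ^ m * ‖iteratedFDeriv ℝ k f w‖ = t ^ k * ‖iteratedFDeriv ℝ k f z‖ := by
    have := congrArg norm h4
    rwa [norm_smul, norm_smul, Real.norm_of_nonneg (by positivity),
      Real.norm_of_nonneg (by positivity)] at this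
  have h6 : ‖iteratedFDeriv ℝ k f z‖ = t ^ (m - k) * ‖iteratedFDeriv ℝ k f w‖ := by
    have h7 : t ^ m = t ^ k * t ^ (m - k) := by rw [← pow_add]; congr 1; omega
    rw [h7, mul_assoc] at h5
    exact (mul_left_cancel₀ (by positivity) h5).symm
  rw [h6, mul_comm]
  gcongr
  exact (hK w hw1).trans (le_max_left _ _)

/-- homogeneous model function -/
def GG (m n : ℕ) (z : Euc n × ℝ) : ℝ :=
  (‖z.1‖ ^ 2) ^ m / (Real.sqrt (‖z.1‖ ^ 2 + z.2 ^ 2)) ^ m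

lemma GG_pos_of_ne {n : ℕ} {z : Euc n × ℝ} (hz : z ≠ 0) : 0 < ‖z.1‖ ^ 2 + z.2 ^ 2 := by
  by_contra h
  apply hz
  have h1 : ‖z.1‖ ^ 2 = 0 := by nlinarith [sq_nonneg ‖z.1‖, sq_nonneg z.2]
  have h2 : z.2 ^ 2 = 0 := by nlinarith [sq_nonneg ‖z.1‖, sq_nonneg z.2]
  ext1
  · simpa using h1
  · simpa using h2

lemma GG_contDiffAt (m n : ℕ) {N : WithTop ℕ∞} {z : Euc n × ℝ} (hz : z ≠ 0) : ContDiffAt ℝ N (GG m n) z := by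
  unfold GG
  have hp := GG_pos_of_ne hz
  have hq : ContDiffAt ℝ N (fun z : Euc n × ℝ => ‖z.1‖ ^ 2) z :=
    (contDiff_fst.norm_sq ℝ).contDiffAt
  refine (hq.pow m).div (((hq.add (contDiffAt_snd.pow 2)).sqrt hp.ne').pow m) ?_
  exact (pow_pos (Real.sqrt_pos.2 hp) m).ne'

lemma GG_homog (m n : ℕ) (t : ℝ) (ht : 0 < t) (z : Euc n × ℝ) :
    GG m n (t • z) = t ^ m * GG m n z := by
  unfold GG
  have h1 : ‖(t • z).1‖ ^ 2 = t ^ 2 * ‖z.1‖ ^ 2 := by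
    simp [norm_smul, mul_pow]
  have h2 : (t • z).2 ^ 2 = t ^ 2 * z.2 ^ 2 := by simp [mul_pow]
  rw [h1, h2, ← mul_add, Real.sqrt_mul (by positivity), Real.sqrt_sq ht.le, mul_pow, mul_pow]
  have : (t ^ 2) ^ m = t ^ m * t ^ m := by ring
  rw [this]
  field_simp

lemma slice_contDiff (m n : ℕ) {N : WithTop ℕ∞} {s : ℝ} (hs : 0 < s) :
    ContDiff ℝ N (fun x : Euc n => GG m n (x, s)) := by
  rw [contDiff_iff_contDiffAt]
  intro x
  have : ContDiffAt ℝ N (GG m n) (x, s) := GG_contDiffAt m n (by simp [hs.ne'])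
  exact ContDiffAt.comp (g := GG m n) (f := fun x : Euc n => (x, s)) x this (by fun_prop)

lemma slice_bound (m n : ℕ) {k : ℕ} (hk : k ≤ m) : ∃ K : ℝ, 0 ≤ K ∧ ∀ s : ℝ, 0 < s → s ≤ 1 →
    ∀ x : Euc n, ‖x‖ ≤ 2 → ‖iteratedFDeriv ℝ k (fun x : Euc n => GG m n (x, s)) x‖ ≤ K := by
  have hcd : ∀ N : WithTop ℕ∞, ContDiffOn ℝ N (GG m n) {0}ᶜ :=
    fun N z hz => (GG_contDiffAt m n hz).contDiffWithinAt
  obtain ⟨K, hK0, hK⟩ := homog_bound (hcd _) (GG_homog m n) hk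
  refine ⟨K * 2 ^ (m - k), by positivity, fun s hs hs1 x hx => ?_⟩
  have hne : ((x, s) : Euc n × ℝ) ≠ 0 := by simp [hs.ne']
  have h := iterFD_affine isOpen_compl_singleton (hcd k) (ContinuousLinearMap.inl ℝ (Euc n) ℝ)
    (0, s) (x := x) (by simp [hs.ne'])
  simp only [ContinuousLinearMap.inl_apply, Prod.mk_add_mk, add_zero, zero_add] at h
  rw [h]
  refine (ContinuousMultilinearMap.norm_compContinuousLinearMap_le _ _).trans ?_
  have h1 : ∏ _i : Fin k, ‖ContinuousLinearMap.inl ℝ (Euc n) ℝ‖ ≤ 1 :=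
    Finset.prod_le_one (fun _ _ => norm_nonneg _) (fun _ _ => ContinuousLinearMap.norm_inl_le_one ℝ (Euc n) ℝ)
  refine (mul_le_of_le_one_right (norm_nonneg _) h1).trans ((hK _ hne).trans ?_)
  gcongr
  rw [Prod.norm_mk]
  refine max_le hx ?_
  rw [Real.norm_of_nonneg hs.le]; linarith

lemma cutoff_bound (m n : ℕ) (χ : ContDiffBump (0 : Euc n)) (hχ : χ.rOut = 2) :
    ∃ K : ℝ, 0 ≤ K ∧ ∀ k ≤ m, ∀ s : ℝ, 0 < s → s ≤ 1 → ∀ x : Euc n,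
      ‖iteratedFDeriv ℝ k (fun x : Euc n => χ x * GG m n (x, s)) x‖ ≤ K := by
  have h1 : ∀ k : ℕ, ∃ K : ℝ, 0 ≤ K ∧ (k ≤ m → ∀ s : ℝ, 0 < s → s ≤ 1 →
    ∀ x : Euc n, ‖x‖ ≤ 2 → ‖iteratedFDeriv ℝ k (fun x : Euc n => GG m n (x, s)) x‖ ≤ K) := by
    intro k
    by_cases hk : k ≤ m
    · obtain ⟨K, h, h'⟩ := slice_bound m n hk
      exact ⟨K, h, fun _ => h'⟩
    · exact ⟨0, le_rfl, fun h => absurd h hk⟩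
  choose A hA0 hA using h1
  have h2 : ∀ k : ℕ, ∃ K : ℝ, ∀ x, ‖iteratedFDeriv ℝ k χ x‖ ≤ K := by
    intro k
    exact (χ.contDiff (n := (k : ℕ∞)).continuous_iteratedFDeriv le_rfl).bounded_above_of_compact_support
      (χ.hasCompactSupport.iteratedFDeriv k)
  choose B hB using h2
  have hB0 : ∀ k, 0 ≤ B k := fun k => (norm_nonneg _).trans (hB k 0)
  let T : ℕ → ℝ := fun k => ∑ i ∈ Finset.range (k + 1), (k.choose i : ℝ) * B i * A (k - i)
  have hT : ∀ k, 0 ≤ T k := fun k => Finset.sum_nonneg fun i _ =>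
    mul_nonneg (mul_nonneg (by positivity) (hB0 _)) (hA0 _)
  refine ⟨∑ k ∈ Finset.range (m + 1), T k, Finset.sum_nonneg fun k _ => hT k, ?_⟩
  intro k hk s hs hs1 x
  refine le_trans ?_ (Finset.single_le_sum (fun k _ => hT k) (Finset.mem_range.2 (by omega : k < m + 1)))
  by_cases hx : ‖x‖ ≤ 2
  · refine (norm_iteratedFDeriv_mul_le (N := (k : ℕ∞)) χ.contDiff (slice_contDiff m n hs) x le_rfl).trans ?_
    refine Finset.sum_le_sum fun i _ => ?_
    have := hA (k - i) (by omega) s hs hs1 x hx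
    have := hB i x
    have := hB0 i
    gcongr
  · have hz : x ∉ tsupport (fun x : Euc n => χ x * GG m n (x, s)) := by
      intro h
      have h' := tsupport_mul_subset_left h
      have h'' : x ∈ tsupport χ := h'
      rw [χ.tsupport_eq, hχ] at h''
      simp at h''
      exact hx h''
    have : iteratedFDeriv ℝ k (fun x : Euc n => χ x * GG m n (x, s)) x = 0 := by
      by_contra h
      exact hz (support_iteratedFDeriv_subset k h)
    rw [this, norm_zero]
    exact hT k

lemma foldr_pD_eq {n : ℕ} (F : Euc n → ℝ) (L : List (Fin n)) :
    ∀ {N : ℕ}, L.length ≤ N → ContDiff ℝ N F → ∀ x,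
    L.foldr pD F x = iteratedFDeriv ℝ L.length F x
      (fun j => EuclideanSpace.single (L.get j) (1 : ℝ)) := by
  induction L with
  | nil => intro N _ _ x; simp
  | cons i L ih =>
    intro N hL hF x
    simp only [List.length_cons] at hL
    have h1 : L.foldr pD F = fun x => iteratedFDeriv ℝ L.length F x
      (fun j => EuclideanSpace.single (L.get j) (1 : ℝ)) := by
      funext y; exact ih (N := N) (by omega) hF y
    rw [List.foldr_cons, h1]
    unfold pD
    have hd : DifferentiableAt ℝ (iteratedFDeriv ℝ L.length F) x :=
      (hF.differentiable_iteratedFDeriv (m := L.length) (by exact_mod_cast hL)) x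
    rw [fderiv_continuousMultilinear_apply_const_apply hd]
    erw [iteratedFDeriv_succ_apply_left]
    rfl

def idxL {n : ℕ} (α : Fin n → ℕ) : List (Fin n) :=
  (List.finRange n).flatMap fun i => List.replicate (α i) i

lemma idxL_length {n : ℕ} (α : Fin n → ℕ) : (idxL α).length = deg α := by
  simp [idxL, deg, List.length_flatMap, Fin.sum_univ_def]

lemma idxL_count {n : ℕ} (α : Fin n → ℕ) (i : Fin n) : (idxL α).count i = α i := by
  simp only [idxL, List.count_flatMap]
  have : (List.count i ∘ fun j => List.replicate (α j) j) = fun j => if j = i then α j else 0 := by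
    funext j; simp [List.count_replicate]
  rw [this, ← Fin.sum_univ_def]
  simp

lemma mD_abs_le {n m : ℕ} {F : Euc n → ℝ} (hF : ContDiff ℝ m F) {α : Fin n → ℕ} (hα : deg α ≤ m)
    (x : Euc n) : |mD α F x| ≤ ‖iteratedFDeriv ℝ (deg α) F x‖ := by
  have h := foldr_pD_eq F (idxL α) (N := m) (by rw [idxL_length]; exact hα) hF x
  change mD α F x = _ at h
  rw [h, ← idxL_length α, ← Real.norm_eq_abs]
  refine (ContinuousMultilinearMap.le_opNorm _ _).trans ?_
  simp

lemma mD_congr {n m : ℕ} {F G : Euc n → ℝ} (hF : ContDiff ℝ m F) (hG : ContDiff ℝ m G)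
    {α : Fin n → ℕ} (hα : deg α ≤ m) (x : Euc n)
    (h : iteratedFDeriv ℝ (deg α) F x = iteratedFDeriv ℝ (deg α) G x) : mD α F x = mD α G x := by
  have hl : (idxL α).length ≤ m := by rw [idxL_length]; exact hα
  rw [← idxL_length] at h
  change (idxL α).foldr pD F x = (idxL α).foldr pD G x
  rw [foldr_pD_eq F _ hl hF, foldr_pD_eq G _ hl hG, h]

/-- vanishing of an iterated derivative at 0 -/
lemma iterFD_zero_of_pD {n k : ℕ} {F : Euc n → ℝ} (hF : ContDiff ℝ k F) (x : Euc n)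
    (h : ∀ L : List (Fin n), L.length = k → L.foldr pD F x = 0) : iteratedFDeriv ℝ k F x = 0 := by
  apply ContinuousMultilinearMap.toMultilinearMap_injective
  refine Module.Basis.ext_multilinear (fun _ => (EuclideanSpace.basisFun (Fin n) ℝ).toBasis) ?_
  intro v
  have h1 := h (List.ofFn v) (by simp)
  rw [foldr_pD_eq F _ (N := k) (by simp) hF] at h1
  simp only [OrthonormalBasis.coe_toBasis, EuclideanSpace.basisFun_apply]
  have key : ∀ (l : List (Fin n)) (hl : l.length = k), 
     iteratedFDeriv ℝ l.length F x (fun j => EuclideanSpace.single (l.get j) (1 : ℝ)) = 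
     iteratedFDeriv ℝ k F x (fun j => EuclideanSpace.single (l.get (j.cast hl.symm)) (1:ℝ)) := by
    intro l hl; subst hl; rfl
  rw [key _ (by simp)] at h1
  simpa using h1

lemma vanish_step {n : ℕ} (i : Fin n) (j : ℕ) (r : Euc n → ℝ) (hr : ContDiff ℝ (⊤ : ℕ∞) r) :
    ∃ r' : Euc n → ℝ, ContDiff ℝ (⊤ : ℕ∞) r' ∧
      pD i (fun x => (‖x‖ ^ 2) ^ (j + 1) * r x) = fun x => (‖x‖ ^ 2) ^ j * r' x := by
  have hq : ContDiff ℝ (⊤ : ℕ∞) (fun x : Euc n => ‖x‖ ^ 2) := contDiff_norm_sq ℝ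
  have hpd : ∀ f : Euc n → ℝ, ContDiff ℝ (⊤ : ℕ∞) f → ContDiff ℝ (⊤ : ℕ∞) (pD i f) := by
    intro f hf
    exact (hf.fderiv_right (m := (⊤ : ℕ∞)) (by simp)).clm_apply contDiff_const
  refine ⟨fun x => (j + 1) * pD i (fun x => ‖x‖ ^ 2) x * r x + ‖x‖ ^ 2 * pD i r x, ?_, ?_⟩
  · have := hpd _ hq
    have := hpd _ hr
    fun_prop
  · funext x
    have hqd : DifferentiableAt ℝ (fun x : Euc n => ‖x‖ ^ 2) x := (hq.differentiable (by simp)) x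
    have hrd : DifferentiableAt ℝ r x := (hr.differentiable (by simp)) x
    have h := ((hqd.hasFDerivAt.pow (j + 1)).mul hrd.hasFDerivAt).fderiv
    have h2 := congrArg (fun A => A (EuclideanSpace.single i (1 : ℝ))) h
    simp only [Nat.add_sub_cancel] at h2
    unfold pD
    refine Eq.trans h2 ?_
    simp
    ring

lemma vanish {n : ℕ} (L : List (Fin n)) : ∀ (j : ℕ) (r : Euc n → ℝ), ContDiff ℝ (⊤ : ℕ∞) r →
    ∃ r' : Euc n → ℝ, ContDiff ℝ (⊤ : ℕ∞) r' ∧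
      L.foldr pD (fun x => (‖x‖ ^ 2) ^ (j + L.length) * r x) = fun x => (‖x‖ ^ 2) ^ j * r' x := by
  induction L with
  | nil => intro j r hr; exact ⟨r, hr, by simp⟩
  | cons i L ih =>
    intro j r hr
    obtain ⟨r1, h1, e1⟩ := ih (j + 1) r hr
    obtain ⟨r2, h2, e2⟩ := vanish_step i j r1 h1
    refine ⟨r2, h2, ?_⟩
    rw [List.foldr_cons, List.length_cons, ← add_assoc, add_right_comm, e1, e2]

lemma cutoff_vanish (m n : ℕ) (χ : ContDiffBump (0 : Euc n)) {s : ℝ} (hs : 0 < s) {k : ℕ}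
    (hk : k < m) : iteratedFDeriv ℝ k (fun x : Euc n => χ x * GG m n (x, s)) 0 = 0 := by
  apply iterFD_zero_of_pD (χ.contDiff.mul (slice_contDiff m n hs))
  intro L hL
  have hr : ContDiff ℝ (⊤ : ℕ∞) (fun x : Euc n => χ x / (Real.sqrt (‖x‖ ^ 2 + s ^ 2)) ^ m) := by
    have hpos : ∀ x : Euc n, 0 < ‖x‖ ^ 2 + s ^ 2 := fun x => by positivity
    refine χ.contDiff.div ((((contDiff_norm_sq ℝ).add contDiff_const).sqrt
      (fun x => (hpos x).ne')).pow m) ?_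
    intro x
    exact (pow_pos (Real.sqrt_pos.2 (hpos x)) m).ne'
  obtain ⟨r', -, h⟩ := vanish L (m - k) _ hr
  have e : (fun x : Euc n => χ x * GG m n (x, s)) = fun x => (‖x‖ ^ 2) ^ (m - k + L.length) *
      (χ x / (Real.sqrt (‖x‖ ^ 2 + s ^ 2)) ^ m) := by
    funext x
    rw [hL, Nat.sub_add_cancel hk.le]
    simp only [GG]; ring
  rw [e, h]
  have : m - k ≠ 0 := by omega
  simp [this]

lemma peval_contDiff {n : ℕ} (P : MPoly n) {N : WithTop ℕ∞} : ContDiff ℝ N (peval P) := by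
  unfold peval
  induction P using MvPolynomial.induction_on with
  | C a => simpa using contDiff_const
  | add p q hp hq => simpa using hp.add hq
  | mul_X p i hp => simpa using hp.mul (by fun_prop)

lemma pD_peval {n : ℕ} (i : Fin n) (P : MPoly n) : pD i (peval P) = peval (MvPolynomial.pderiv i P) := by
  induction P using MvPolynomial.induction_on with
  | C a =>
    funext x
    have e : peval (MvPolynomial.C a : MPoly n) = fun _ => a := by funext x; simp [peval]
    simp only [pD, e]
    simp [peval]
  | add p q hp hq =>
    funext x
    have e : peval (p + q) = fun x => peval p x + peval q x := by funext x; simp [peval]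
    have hp' := ((peval_contDiff p (N := 1)).differentiable (by simp)) x
    have hq' := ((peval_contDiff q (N := 1)).differentiable (by simp)) x
    have h1 := congrFun hp x
    have h2 := congrFun hq x
    simp only [pD] at h1 h2 ⊢
    rw [e, fderiv_fun_add hp' hq']
    simp [h1, h2, peval]
  | mul_X p j hp =>
    funext x
    have e : peval (p * MvPolynomial.X j) = fun x => peval p x * x j := by funext x; simp [peval]
    have hp' := ((peval_contDiff p (N := 1)).differentiable (by simp)) x
    have hj : HasFDerivAt (fun x : Euc n => x j) (EuclideanSpace.proj j : Euc n →L[ℝ] ℝ) x :=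
      (EuclideanSpace.proj j : Euc n →L[ℝ] ℝ).hasFDerivAt
    have h1 := congrFun hp x
    simp only [pD] at h1 ⊢
    rw [e, (hp'.hasFDerivAt.fun_mul hj).fderiv]
    simp [h1, peval, MvPolynomial.pderiv_X, Pi.single_apply]
    by_cases hij : j = i <;> simp [hij]

lemma foldr_pD_peval {n : ℕ} (L : List (Fin n)) (P : MPoly n) :
    L.foldr pD (peval P) = peval (L.foldr (fun i Q => MvPolynomial.pderiv i Q) P) := by
  induction L with
  | nil => rfl
  | cons i L ih => rw [List.foldr_cons, ih, pD_peval]; rfl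

lemma coeff_foldr {n : ℕ} (L : List (Fin n)) : ∀ t : Fin n →₀ ℕ, ∃ c : ℝ, 1 ≤ c ∧ ∀ P : MPoly n,
    (L.foldr (fun i Q => MvPolynomial.pderiv i Q) P).coeff t =
      c * P.coeff (t + Multiset.toFinsupp (L : Multiset (Fin n))) := by
  induction L with
  | nil => intro t; exact ⟨1, le_rfl, fun P => by simp⟩
  | cons i L ih =>
    intro t
    obtain ⟨c, hc, h⟩ := ih (t + Finsupp.single i 1)
    refine ⟨c * (t i + 1), ?_, fun P => ?_⟩
    · have : (0 : ℝ) ≤ t i := by positivity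
      nlinarith
    · rw [List.foldr_cons, MvPolynomial.coeff_pderiv, h]
      have : t + Multiset.toFinsupp ((i :: L : List (Fin n)) : Multiset (Fin n)) =
        t + Finsupp.single i 1 + Multiset.toFinsupp (L : Multiset (Fin n)) := by
        rw [← Multiset.cons_coe, ← Multiset.singleton_add, map_add, Multiset.toFinsupp_singleton,
          add_assoc]
      rw [this]; ring

lemma mD_peval_zero {n : ℕ} (α : Fin n →₀ ℕ) : ∃ c : ℝ, 1 ≤ c ∧ ∀ P : MPoly n,
    mD α (peval P) 0 = c * P.coeff α := by
  obtain ⟨c, hc, h⟩ := coeff_foldr (idxL α) 0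
  refine ⟨c, hc, fun P => ?_⟩
  have e : Multiset.toFinsupp (idxL α : Multiset (Fin n)) = α := by
    ext i; simp [idxL_count]
  rw [zero_add, e] at h
  rw [← h P]
  change (idxL α).foldr pD (peval P) 0 = _
  rw [foldr_pD_peval]
  simp only [peval]
  rw [← MvPolynomial.constantCoeff_eq]
  have : (fun i => (0 : Euc n) i) = 0 := by funext i; simp
  rw [this, MvPolynomial.constantCoeff_eq, MvPolynomial.eval_zero]
  rfl

lemma coeff_truncLE {n : ℕ} (d : ℕ) (P : MPoly n) (t : Fin n →₀ ℕ) :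
    (truncLE d P).coeff t = if (t.sum fun _ e => e) ≤ d then P.coeff t else 0 := by
  classical
  unfold truncLE
  rw [MvPolynomial.coeff_sum]
  simp only [MvPolynomial.coeff_monomial]
  rw [Finset.sum_ite_eq']
  by_cases h : (t.sum fun _ e => e) ≤ d
  · by_cases h0 : P.coeff t = 0
    · simp [h0]
    · simp [h, h0]
  · simp [h]

lemma totalDegree_truncLE {n : ℕ} (d : ℕ) (P : MPoly n) : (truncLE d P).totalDegree ≤ d := by
  refine Finset.sup_le fun t ht => ?_
  rw [MvPolynomial.mem_support_iff, coeff_truncLE] at ht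
  by_contra h
  rw [if_neg h] at ht
  exact ht rfl

lemma deg_eq_sum {n : ℕ} (t : Fin n →₀ ℕ) : deg t = t.sum fun _ e => e := by
  simp [deg, Finsupp.sum_fintype]

lemma poly_bound (m n : ℕ) (χ : ContDiffBump (0 : Euc n)) :
    ∃ K : ℝ, 0 ≤ K ∧ ∀ P : MPoly n, P.totalDegree ≤ m → (∀ t, |P.coeff t| ≤ 1) →
      ∀ k ≤ m, ∀ x : Euc n, ‖iteratedFDeriv ℝ k (fun x => χ x * peval P x) x‖ ≤ K := by
  have hcd : ∀ t : Fin n →₀ ℕ, ∀ N : WithTop ℕ∞, N ≤ (⊤ : ℕ∞) → 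
      ContDiff ℝ N (fun x => χ x * peval (MvPolynomial.monomial t 1) x) := 
    fun t N hN => (χ.contDiff (n := (⊤ : ℕ∞))).of_le hN |>.mul (peval_contDiff _)
  have hcs : ∀ t : Fin n →₀ ℕ, HasCompactSupport 
      (fun x => χ x * peval (MvPolynomial.monomial t 1) x) := fun t => χ.hasCompactSupport.mul_right
  have h2 : ∀ (t : Fin n →₀ ℕ) (k : ℕ), ∃ K : ℝ, ∀ x, 
      ‖iteratedFDeriv ℝ k (fun x => χ x * peval (MvPolynomial.monomial t 1) x) x‖ ≤ K := by
    intro t k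
    exact ((hcd t (k : ℕ∞) (by exact_mod_cast le_top)).continuous_iteratedFDeriv le_rfl).bounded_above_of_compact_support
      ((hcs t).iteratedFDeriv k)
  choose B hB using h2
  have hB0 : ∀ t k, 0 ≤ B t k := fun t k => (norm_nonneg _).trans (hB t k 0)
  let S : Finset (Fin n →₀ ℕ) := (Finsupp.finite_of_degree_le (σ := Fin n) m).toFinset
  refine ⟨∑ k ∈ Finset.range (m + 1), ∑ t ∈ S, B t k,
    Finset.sum_nonneg fun k _ => Finset.sum_nonneg fun t _ => hB0 t k, ?_⟩
  intro P hP hc k hk x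
  refine le_trans ?_ (Finset.single_le_sum (f := fun k => ∑ t ∈ S, B t k) (fun k _ => Finset.sum_nonneg fun t _ => hB0 t k)
    (Finset.mem_range.2 (by omega : k < m + 1)))
  have hsub : P.support ⊆ S := by
    intro t ht
    have := (MvPolynomial.le_totalDegree ht).trans hP
    simpa [S, Finsupp.degree_eq_sum, Finsupp.sum_fintype] using this
  have e : (fun x => χ x * peval P x) = fun x => ∑ t ∈ S, P.coeff t • 
      (χ x * peval (MvPolynomial.monomial t 1) x) := by
    funext x
    have h1 : P = ∑ t ∈ S, MvPolynomial.monomial t (P.coeff t) := by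
      conv_lhs => rw [P.as_sum]
      refine Finset.sum_subset hsub ?_
      intro t _ ht
      rw [MvPolynomial.notMem_support_iff.1 ht]; simp
    have h2 : peval P x = ∑ t ∈ S, P.coeff t * peval (MvPolynomial.monomial t 1) x := by
      conv_lhs => rw [h1]
      simp [peval, MvPolynomial.eval_monomial]
    rw [h2, Finset.mul_sum]
    refine Finset.sum_congr rfl fun t _ => ?_
    simp only [smul_eq_mul]; ring
  have hk' : ((k : ℕ) : WithTop ℕ∞) ≤ ((⊤ : ℕ∞) : WithTop ℕ∞) := by exact_mod_cast le_top
  rw [e, iteratedFDeriv_fun_sum_apply (fun t _ => ((hcd t k hk').const_smul _).contDiffAt)]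
  refine (norm_sum_le _ _).trans (Finset.sum_le_sum fun t _ => ?_)
  rw [iteratedFDeriv_const_smul_apply' (hcd t k hk').contDiffAt, norm_smul]
  calc _ ≤ 1 * B t k := by
        gcongr
        · exact hc t
        · exact hB t k x
    _ = _ := one_mul _

lemma GG_nonneg (m n : ℕ) (z : Euc n × ℝ) : 0 ≤ GG m n z := by
  unfold GG; positivity

lemma GG_lower (m n : ℕ) {x : Euc n} {s : ℝ} (hs : 0 < s) (hx : s ≤ ‖x‖) :
    ‖x‖ ^ m ≤ 2 ^ m * GG m n (x, s) := by
  have hxp : 0 < ‖x‖ := hs.trans_le hx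
  have h1 : Real.sqrt (‖x‖ ^ 2 + s ^ 2) ≤ 2 * ‖x‖ := by
    apply Real.sqrt_le_iff.2 ⟨by positivity, by nlinarith⟩
  have h0 : 0 < Real.sqrt (‖x‖ ^ 2 + s ^ 2) := Real.sqrt_pos.2 (by positivity)
  unfold GG
  simp only
  rw [← mul_div_assoc, le_div_iff₀ (by positivity)]
  calc ‖x‖ ^ m * Real.sqrt (‖x‖ ^ 2 + s ^ 2) ^ m ≤ ‖x‖ ^ m * (2 * ‖x‖) ^ m := by gcongr
    _ = _ := by rw [mul_pow]; ring

lemma choose_scales {m n : ℕ} {P : MPoly n}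
    (hg : ∀ x : Euc n, 0 ≤ peval P x + ‖x‖ ^ m)
    (hl : ∀ ε : ℝ, 0 < ε → ∃ δ : ℝ, 0 < δ ∧ ∀ x : Euc n, ‖x‖ ≤ δ → 0 ≤ peval P x + ε * ‖x‖ ^ m) :
    ∃ s : ℕ → ℝ, (∀ k, 0 < s k) ∧ (∀ k, s k ≤ 1) ∧
      ∀ x : Euc n, x ≠ 0 → ∃ k, s k ≤ ‖x‖ ∧ 0 ≤ peval P x + (1 / 2) ^ k * ‖x‖ ^ m := by
  have hl' : ∀ k : ℕ, ∃ δ : ℝ, 0 < δ ∧ ∀ x : Euc n, ‖x‖ ≤ δ →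
      0 ≤ peval P x + (1 / 2) ^ (k + 1) * ‖x‖ ^ m := fun k => hl _ (by positivity)
  choose δ hδ0 hδ using hl'
  refine ⟨fun k => min (δ k) (1 / (k + 1)), fun k => lt_min (hδ0 k) (by positivity), ?_, ?_⟩
  · intro k
    refine (min_le_right _ _).trans ?_
    rw [div_le_one (by positivity)]
    have : (0 : ℝ) ≤ k := by positivity
    linarith
  · intro x hx
    have hex : ∃ k : ℕ, min (δ k) (1 / ((k : ℝ) + 1)) ≤ ‖x‖ := by
      obtain ⟨k, hk⟩ := exists_nat_one_div_lt (norm_pos_iff.2 hx)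
      exact ⟨k, (min_le_right _ _).trans hk.le⟩
    classical
    refine ⟨Nat.find hex, Nat.find_spec hex, ?_⟩
    rcases h : Nat.find hex with _ | j
    · simpa using hg x
    · have := Nat.find_min hex (m := j) (by omega)
      push Not at this
      exact hδ j x (this.le.trans (min_le_left _ _))

/-- **(B')**: every `P ∈ Γ̃₀ = π Γ₀⁺` is the `(m-1)`-jet at `0` of a nonnegative `C^m`
function of controlled norm. -/
theorem GammaTilde0_has_nonneg_extension (m n : ℕ) (hm : 0 < m) (hn : 0 < n) :
    ∃ C : ℝ, 0 < C ∧
      ∀ Pj : MPoly n, (∃ P ∈ Gamma0plus m n, truncLE (m - 1) P = Pj) →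
        ∃ F : Euc n → ℝ, CmNormLe m n F C ∧ (∀ y, 0 ≤ F y) ∧ IsJetAt m n F 0 Pj := by
  let χ : ContDiffBump (0 : Euc n) := ⟨1, 2, one_pos, by norm_num⟩
  obtain ⟨K1, hK1, hb1⟩ := poly_bound m n χ
  obtain ⟨K2, hK2, hb2⟩ := cutoff_bound m n χ rfl
  refine ⟨K1 + 2 ^ m * (2 * K2) + 1, by positivity, ?_⟩
  rintro Pj ⟨P, ⟨hdeg, hder, hg, hl⟩, rfl⟩
  have hcoef : ∀ t, |P.coeff t| ≤ 1 := by
    intro t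
    by_cases ht : deg t ≤ m
    · obtain ⟨c, hc, h⟩ := mD_peval_zero t
      have h1 := hder t ht
      rw [h P, abs_mul, abs_of_nonneg (by linarith)] at h1
      nlinarith [abs_nonneg (P.coeff t)]
    · have : P.coeff t = 0 := by
        by_contra h0
        have h2 := MvPolynomial.le_totalDegree (MvPolynomial.mem_support_iff.2 h0)
        rw [← deg_eq_sum] at h2
        omega
      simp [this]
  obtain ⟨s, hs0, hs1, hs⟩ := choose_scales hg hl
  let g : ℕ → Euc n → ℝ := fun k x => (1 / 2 : ℝ) ^ k • (χ x * GG m n (x, s k))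
  have hbase : ∀ k, ∀ N : WithTop ℕ∞, N ≤ (⊤ : ℕ∞) →
      ContDiff ℝ N (fun x => χ x * GG m n (x, s k)) := fun k N hN =>
    ((χ.contDiff (n := (⊤ : ℕ∞))).of_le hN).mul (slice_contDiff m n (hs0 k))
  have hnat : ∀ k : ℕ, ((k : ℕ) : WithTop ℕ∞) ≤ ((⊤ : ℕ∞) : WithTop ℕ∞) := fun k => by
    exact_mod_cast le_top
  have hgc : ∀ k, ContDiff ℝ (m : ℕ∞) (g k) := fun k => (hbase k _ (hnat m)).const_smul _
  have hgi : ∀ (j k : ℕ) (x : Euc n), iteratedFDeriv ℝ j (g k) x =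
      (1 / 2 : ℝ) ^ k • iteratedFDeriv ℝ j (fun x => χ x * GG m n (x, s k)) x := fun j k x =>
    iteratedFDeriv_const_smul_apply' (hbase k j (hnat j)).contDiffAt
  let v : ℕ → ℕ → ℝ := fun _ k => (1 / 2 : ℝ) ^ k * K2
  have hv : ∀ j : ℕ, (j : ℕ∞) ≤ (m : ℕ∞) → Summable (v j) := fun j _ =>
    summable_geometric_two.mul_right K2
  have hvb : ∀ (j k : ℕ) (x : Euc n), (j : ℕ∞) ≤ (m : ℕ∞) → ‖iteratedFDeriv ℝ j (g k) x‖ ≤ v j k := by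
    intro j k x hj
    rw [hgi, norm_smul, Real.norm_of_nonneg (by positivity)]
    have := hb2 j (by exact_mod_cast hj) (s k) (hs0 k) (hs1 k) x
    simp only [v]
    gcongr
  let h : Euc n → ℝ := fun x => ∑' k, g k x
  have hhc : ContDiff ℝ (m : ℕ∞) h := contDiff_tsum hgc hv hvb
  have hhi : ∀ j ≤ m, ∀ x, iteratedFDeriv ℝ j h x = ∑' k, iteratedFDeriv ℝ j (g k) x := by
    intro j hj x
    exact congrFun (iteratedFDeriv_tsum hgc hv hvb (k := j) (by exact_mod_cast hj)) x
  have hhb : ∀ j ≤ m, ∀ x, ‖iteratedFDeriv ℝ j h x‖ ≤ 2 * K2 := by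
    intro j hj x
    have hj' : (j : ℕ∞) ≤ (m : ℕ∞) := by exact_mod_cast hj
    rw [hhi j hj x]
    refine tsum_of_norm_bounded ?_ (fun k => hvb j k x hj')
    exact hasSum_geometric_two.mul_right K2
  have hPc : ContDiff ℝ (m : ℕ∞) (fun x => χ x * peval P x) := χ.contDiff.mul (peval_contDiff P)
  have hFc : ContDiff ℝ (m : ℕ∞) (fun x => χ x * peval P x + (2 ^ m : ℝ) • h x) :=
    hPc.add (hhc.const_smul _)
  have hFi : ∀ j ≤ m, ∀ x, iteratedFDeriv ℝ j (fun x => χ x * peval P x + (2 ^ m : ℝ) • h x) x =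
      iteratedFDeriv ℝ j (fun x => χ x * peval P x) x + (2 ^ m : ℝ) • iteratedFDeriv ℝ j h x := by
    intro j hj x
    have hj' : ((j : ℕ) : WithTop ℕ∞) ≤ ((m : ℕ∞) : WithTop ℕ∞) := by exact_mod_cast hj
    have hh' := (hhc.of_le hj').contDiffAt (x := x)
    rw [← iteratedFDeriv_const_smul_apply' hh']
    exact iteratedFDeriv_add_apply (hPc.of_le hj').contDiffAt (hh'.const_smul _)
  refine ⟨fun x => χ x * peval P x + (2 ^ m : ℝ) • h x, ⟨hFc, ?_⟩, ?_, totalDegree_truncLE _ _, ?_⟩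
  · intro α hα x
    refine (mD_abs_le hFc hα x).trans ?_
    rw [hFi _ hα]
    refine (norm_add_le _ _).trans ?_
    rw [norm_smul, Real.norm_of_nonneg (by positivity)]
    have h1 := hb1 P hdeg hcoef _ hα x
    have h2 := hhb _ hα x
    have h3 : (2 : ℝ) ^ m * ‖iteratedFDeriv ℝ (deg α) h x‖ ≤ 2 ^ m * (2 * K2) := by gcongr
    linarith
  · intro x
    have hgn : ∀ k, 0 ≤ g k x := fun k => by
      have := GG_nonneg m n (x, s k)
      have := χ.nonneg' x
      simp only [g, smul_eq_mul]
      positivity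
    by_cases hx : x = 0
    · obtain ⟨δ, hδ, hδ'⟩ := hl 1 one_pos
      have h0 := hδ' 0 (by simpa using hδ.le)
      rw [norm_zero, zero_pow hm.ne', mul_zero, add_zero] at h0
      subst hx
      have := χ.nonneg' (0 : Euc n)
      have : 0 ≤ h 0 := tsum_nonneg hgn
      simp only [smul_eq_mul]
      positivity
    · obtain ⟨k, hk, hk'⟩ := hs x hx
      have hsum : Summable fun k => g k x := by
        refine Summable.of_norm_bounded (hv 0 (by simp)) (fun k => ?_)
        have := hvb 0 k x (by simp)
        rwa [norm_iteratedFDeriv_zero] at this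
      have h1 : g k x ≤ h x := hsum.le_tsum k (fun j _ => hgn j)
      have h2 := GG_lower m n (hs0 k) hk
      have hχ := χ.nonneg' x
      simp only [smul_eq_mul]
      calc 0 ≤ χ x * (peval P x + (1 / 2) ^ k * ‖x‖ ^ m) := mul_nonneg hχ hk'
        _ ≤ χ x * (peval P x + (1 / 2) ^ k * (2 ^ m * GG m n (x, s k))) := by gcongr
        _ = χ x * peval P x + 2 ^ m * g k x := by simp only [g, smul_eq_mul]; ring
        _ ≤ _ := by gcongr
  · intro α hα
    have hαm : deg α ≤ m := by omega
    have e1 : mD α (peval (truncLE (m - 1) P)) 0 = mD α (peval P) 0 := by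
      obtain ⟨c, -, hc⟩ := mD_peval_zero (Finsupp.equivFunOnFinite.symm α)
      simp only [Finsupp.coe_equivFunOnFinite_symm] at hc
      rw [hc, hc, coeff_truncLE, ← deg_eq_sum, if_pos (by simpa using hα)]
    rw [e1]
    refine mD_congr (peval_contDiff P) hFc hαm 0 ?_
    rw [hFi _ hαm, hhi _ hαm]
    have e2 : ∀ k, iteratedFDeriv ℝ (deg α) (g k) 0 = 0 := fun k => by
      rw [hgi, cutoff_vanish m n χ (hs0 k) (by omega), smul_zero]
    simp only [e2, tsum_zero, smul_zero, add_zero]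
    have e3 : (fun x => χ x * peval P x) =ᶠ[nhds 0] peval P := by
      filter_upwards [χ.eventuallyEq_one] with x hx
      rw [hx]; simp
    exact (e3.iteratedFDeriv ℝ (deg α)).eq_of_nhds.symm

end
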